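/- Let R be a commutative ring and P, Q finitely generated projective R-modules. There is a natural filtration 0 ⊆ M_{(3)} ⊆ M_{(2,1)} ⊆ Sym^3(P ⊗ Q), where M_{(3)} is the image of the determinant map Λ^3 P ⊗ Λ^3 Q → Sym^3(P ⊗ Q), such that there are short exact sequences 0 → Λ^3 P ⊗ Λ^3 Q → M_{(2,1)} → L^3_1 P ⊗ L^3_1 Q → 0 and 0 → M_{(2,1)} → Sym^3(P ⊗ Q) → Sym^3 P ⊗ Sym^3 Q → 0. -/

import Mathlib

open TensorProduct

open TensorProduct

section SymLib
variable (R : Type*) [CommRing R]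

/-- Relations defining the second symmetric power. -/
def sq2 (M : Type*) [AddCommGroup M] [Module R M] : Submodule R (M ⊗[R] M) :=
  Submodule.span R {x | ∃ a b : M, x = a ⊗ₜ[R] b - b ⊗ₜ[R] a}

/-- The second symmetric power. -/
abbrev SymSq (M : Type*) [AddCommGroup M] [Module R M] := (M ⊗[R] M) ⧸ sq2 R M

/-- Relations defining the third symmetric power. -/
def sq3 (M : Type*) [AddCommGroup M] [Module R M] : Submodule R (M ⊗[R] (M ⊗[R] M)) :=
  Submodule.span R
    ({x | ∃ a b c : M, x = a ⊗ₜ[R] (b ⊗ₜ[R] c) - b ⊗ₜ[R] (a ⊗ₜ[R] c)} ∪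
     {x | ∃ a b c : M, x = a ⊗ₜ[R] (b ⊗ₜ[R] c) - a ⊗ₜ[R] (c ⊗ₜ[R] b)})

/-- The third symmetric power. -/
abbrev SymCube (M : Type*) [AddCommGroup M] [Module R M] := (M ⊗[R] (M ⊗[R] M)) ⧸ sq3 R M

variable {M N : Type*} [AddCommGroup M] [Module R M] [AddCommGroup N] [Module R N]

/-- Multiplication by `v` as a map `Sym² M → Sym³ M`. -/
noncomputable def symMulAux (v : M) : SymSq R M →ₗ[R] SymCube R M :=
  Submodule.liftQ _ ((sq3 R M).mkQ ∘ₗ TensorProduct.mk R M (M ⊗[R] M) v) (by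
    rw [sq2, Submodule.span_le]
    rintro x ⟨a, b, rfl⟩
    simp only [SetLike.mem_coe, LinearMap.mem_ker, LinearMap.comp_apply,
      TensorProduct.mk_apply, map_sub, tmul_sub]
    rw [← map_sub, Submodule.mkQ_apply, Submodule.Quotient.mk_eq_zero]
    exact Submodule.subset_span (Or.inr ⟨v, a, b, rfl⟩))

lemma symMulAux_mk (v : M) (x : M ⊗[R] M) :
    symMulAux R v (Submodule.Quotient.mk x) = Submodule.Quotient.mk (v ⊗ₜ[R] x) := rfl

/-- The multiplication `M ⊗ Sym² M → Sym³ M` as a bilinear map. -/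
noncomputable def symMulBil : M →ₗ[R] SymSq R M →ₗ[R] SymCube R M where
  toFun := symMulAux R
  map_add' v w := by
    refine LinearMap.ext fun x => ?_
    obtain ⟨y, rfl⟩ := Submodule.Quotient.mk_surjective _ x
    simp [symMulAux_mk, add_tmul, Submodule.Quotient.mk_add]
  map_smul' r v := by
    refine LinearMap.ext fun x => ?_
    obtain ⟨y, rfl⟩ := Submodule.Quotient.mk_surjective _ x
    simp only [symMulAux_mk, RingHom.id_apply, LinearMap.smul_apply]
    rw [← Submodule.Quotient.mk_smul, smul_tmul']

/-- The multiplication map `M ⊗ Sym² M → Sym³ M`. -/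
noncomputable def symMul : M ⊗[R] SymSq R M →ₗ[R] SymCube R M :=
  TensorProduct.lift (symMulBil R)

lemma symMul_tmul (v : M) (x : M ⊗[R] M) :
    symMul R (v ⊗ₜ[R] (Submodule.Quotient.mk x)) = Submodule.Quotient.mk (v ⊗ₜ[R] x) := rfl

/-- The Schur functor `L³₁`, the kernel of the multiplication `M ⊗ Sym² M → Sym³ M`. -/
noncomputable def SchurL31 : Submodule R (M ⊗[R] SymSq R M) := LinearMap.ker (symMul R)

variable {R}

/-- Functoriality of `Sym²`. -/
noncomputable def symSqMap (f : M →ₗ[R] N) : SymSq R M →ₗ[R] SymSq R N :=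
  Submodule.mapQ _ _ (TensorProduct.map f f) (by
    rw [sq2, Submodule.span_le]
    rintro x ⟨a, b, rfl⟩
    simp only [SetLike.mem_coe, Submodule.mem_comap, map_sub, TensorProduct.map_tmul]
    exact Submodule.subset_span ⟨f a, f b, rfl⟩)

/-- Functoriality of `Sym³`. -/
noncomputable def symCubeMap (f : M →ₗ[R] N) : SymCube R M →ₗ[R] SymCube R N :=
  Submodule.mapQ _ _ (TensorProduct.map f (TensorProduct.map f f)) (by
    rw [sq3, Submodule.span_le]
    rintro x (⟨a, b, c, rfl⟩ | ⟨a, b, c, rfl⟩) <;>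
      simp only [SetLike.mem_coe, Submodule.mem_comap, map_sub, TensorProduct.map_tmul]
    · exact Submodule.subset_span (Or.inl ⟨f a, f b, f c, rfl⟩)
    · exact Submodule.subset_span (Or.inr ⟨f a, f b, f c, rfl⟩))

end SymLib

section SymLib2
variable {R : Type*} [CommRing R]
variable {M N : Type*} [AddCommGroup M] [Module R M] [AddCommGroup N] [Module R N]

lemma symMul_natural (f : M →ₗ[R] N) :
    symCubeMap f ∘ₗ symMul R = symMul R ∘ₗ TensorProduct.map f (symSqMap f) := by
  apply TensorProduct.ext'
  intro v x
  obtain ⟨y, rfl⟩ := Submodule.Quotient.mk_surjective _ x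
  simp only [LinearMap.comp_apply, TensorProduct.map_tmul]
  rw [symMul_tmul]
  show Submodule.Quotient.mk ((TensorProduct.map f (TensorProduct.map f f)) (v ⊗ₜ[R] y)) = _
  rw [TensorProduct.map_tmul,
    show symSqMap f (Submodule.Quotient.mk y) = Submodule.Quotient.mk (TensorProduct.map f f y) from rfl,
    symMul_tmul]

/-- Functoriality of the Schur functor `L³₁`. -/
noncomputable def schurL31Map (f : M →ₗ[R] N) : SchurL31 (R := R) (M := M) →ₗ[R] SchurL31 (R := R) (M := N) :=
  LinearMap.restrict (TensorProduct.map f (symSqMap f)) (fun x hx => by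
    have := congrFun (congrArg DFunLike.coe (symMul_natural f)) x
    simp only [LinearMap.comp_apply] at this
    simp only [SchurL31, LinearMap.mem_ker] at hx ⊢
    rw [← this, hx, map_zero])

end SymLib2

section Cauchy
variable (R : Type u) [CommRing R]
variable (P Q : Type u) [AddCommGroup P] [Module R P] [AddCommGroup Q] [Module R Q]

/-- The value of the determinant map `Λ³P ⊗ Λ³Q → Sym³(P ⊗ Q)` on
`(p₀ ∧ p₁ ∧ p₂) ⊗ (q₀ ∧ q₁ ∧ q₂)`: the 3×3 determinant of the matrix `(pᵢ ⊗ qⱼ)`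
computed in `Sym³(P ⊗ Q)`. -/
noncomputable def detElem (p : Fin 3 → P) (q : Fin 3 → Q) : SymCube R (P ⊗[R] Q) :=
  Submodule.Quotient.mk (∑ σ : Equiv.Perm (Fin 3), (Equiv.Perm.sign σ : ℤ) •
    ((p 0 ⊗ₜ[R] q (σ 0)) ⊗ₜ[R] ((p 1 ⊗ₜ[R] q (σ 1)) ⊗ₜ[R] (p 2 ⊗ₜ[R] q (σ 2)))))

/-- The filtration step `M₍₃₎(Sym³(P ⊗ Q))`: the image of the determinant map
`Λ³P ⊗ Λ³Q → Sym³(P ⊗ Q)`, i.e. the span of all `3×3` determinants. -/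
noncomputable def M3 : Submodule R (SymCube R (P ⊗[R] Q)) :=
  Submodule.span R {x | ∃ p : Fin 3 → P, ∃ q : Fin 3 → Q, x = detElem R P Q p q}

/-- The value of the map `Λ²P ⊗ P ⊗ Λ²Q ⊗ Q → Sym³(P ⊗ Q)`,
`(p₁ ∧ p₂) ⊗ p₃ ⊗ (q₁ ∧ q₂) ⊗ q₃ ↦ det(pᵢ ⊗ qⱼ)_{i,j ≤ 2} · (p₃ ⊗ q₃)`. -/
noncomputable def det2Elem (p1 p2 p3 : P) (q1 q2 q3 : Q) : SymCube R (P ⊗[R] Q) :=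
  Submodule.Quotient.mk
    ((p1 ⊗ₜ[R] q1) ⊗ₜ[R] ((p2 ⊗ₜ[R] q2) ⊗ₜ[R] (p3 ⊗ₜ[R] q3))
      - (p1 ⊗ₜ[R] q2) ⊗ₜ[R] ((p2 ⊗ₜ[R] q1) ⊗ₜ[R] (p3 ⊗ₜ[R] q3)))

/-- The filtration step `M₍₂,₁₎(Sym³(P ⊗ Q))`: `M₍₃₎` together with the image of
`Λ²P ⊗ P ⊗ Λ²Q ⊗ Q → Sym³(P ⊗ Q)`. -/
noncomputable def M21 : Submodule R (SymCube R (P ⊗[R] Q)) :=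
  M3 R P Q ⊔ Submodule.span R
    {x | ∃ p1 p2 p3 : P, ∃ q1 q2 q3 : Q, x = det2Elem R P Q p1 p2 p3 q1 q2 q3}

end Cauchy

section CauchyProof

section Basics
variable {R : Type*} [CommRing R]
variable {M N P Q : Type*} [AddCommGroup M] [Module R M] [AddCommGroup N] [Module R N]
  [AddCommGroup P] [Module R P] [AddCommGroup Q] [Module R Q]

/-- Swap the first two factors. -/
noncomputable def cpS12 : M ⊗[R] (M ⊗[R] M) →ₗ[R] M ⊗[R] (M ⊗[R] M) :=
  (TensorProduct.leftComm R M M M).toLinearMap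

/-- Swap the last two factors. -/
noncomputable def cpS23 : M ⊗[R] (M ⊗[R] M) →ₗ[R] M ⊗[R] (M ⊗[R] M) :=
  LinearMap.lTensor M (TensorProduct.comm R M M).toLinearMap

@[simp] lemma cpS12_tmul (a b c : M) :
    cpS12 (R := R) (a ⊗ₜ[R] (b ⊗ₜ[R] c)) = b ⊗ₜ[R] (a ⊗ₜ[R] c) := rfl

@[simp] lemma cpS23_tmul (a b c : M) :
    cpS23 (R := R) (a ⊗ₜ[R] (b ⊗ₜ[R] c)) = a ⊗ₜ[R] (c ⊗ₜ[R] b) := rfl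

/-- The product in the symmetric cube. -/
def cpM3 (a b c : M) : SymCube R M := Submodule.Quotient.mk (a ⊗ₜ[R] (b ⊗ₜ[R] c))

lemma cpM3_swap12 (a b c : M) : cpM3 (R := R) a b c = cpM3 b a c :=
  (Submodule.Quotient.eq _).2 (Submodule.subset_span (Or.inl ⟨a, b, c, rfl⟩))

lemma cpM3_swap23 (a b c : M) : cpM3 (R := R) a b c = cpM3 a c b :=
  (Submodule.Quotient.eq _).2 (Submodule.subset_span (Or.inr ⟨a, b, c, rfl⟩))

lemma cpM3_rot (a b c : M) : cpM3 (R := R) a b c = cpM3 b c a := by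
  rw [cpM3_swap12, cpM3_swap23]

/-- Maps out of the symmetric cube. -/
noncomputable def cpSymLift (f : M ⊗[R] (M ⊗[R] M) →ₗ[R] N)
    (h12 : f ∘ₗ cpS12 = f) (h23 : f ∘ₗ cpS23 = f) : SymCube R M →ₗ[R] N :=
  Submodule.liftQ _ f (by
    rw [sq3, Submodule.span_le]
    rintro x (⟨a, b, c, rfl⟩ | ⟨a, b, c, rfl⟩)
    · have := LinearMap.congr_fun h12 (a ⊗ₜ[R] (b ⊗ₜ[R] c))
      simp only [LinearMap.comp_apply, cpS12_tmul] at this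
      simp [this]
    · have := LinearMap.congr_fun h23 (a ⊗ₜ[R] (b ⊗ₜ[R] c))
      simp only [LinearMap.comp_apply, cpS23_tmul] at this
      simp [this])

lemma cpSymLift_m3 (f : M ⊗[R] (M ⊗[R] M) →ₗ[R] N)
    (h12 : f ∘ₗ cpS12 = f) (h23 : f ∘ₗ cpS23 = f) (a b c : M) :
    cpSymLift f h12 h23 (cpM3 a b c) = f (a ⊗ₜ[R] (b ⊗ₜ[R] c)) := rfl

/-- Rearrangement `(P ⊗ Q)^{⊗3} ≃ P^{⊗3} ⊗ Q^{⊗3}`. -/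
noncomputable def cpRe : (P ⊗[R] Q) ⊗[R] ((P ⊗[R] Q) ⊗[R] (P ⊗[R] Q)) ≃ₗ[R]
    (P ⊗[R] (P ⊗[R] P)) ⊗[R] (Q ⊗[R] (Q ⊗[R] Q)) :=
  (TensorProduct.congr (LinearEquiv.refl R (P ⊗[R] Q))
    (TensorProduct.tensorTensorTensorComm R P Q P Q)) ≪≫ₗ
    TensorProduct.tensorTensorTensorComm R P Q (P ⊗[R] P) (Q ⊗[R] Q)

@[simp] lemma cpRe_tmul (a b c : P) (x y z : Q) :
    cpRe (R := R) ((a ⊗ₜ[R] x) ⊗ₜ[R] ((b ⊗ₜ[R] y) ⊗ₜ[R] (c ⊗ₜ[R] z))) =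
      (a ⊗ₜ[R] (b ⊗ₜ[R] c)) ⊗ₜ[R] (x ⊗ₜ[R] (y ⊗ₜ[R] z)) := rfl

@[simp] lemma cpRe_symm_tmul (a b c : P) (x y z : Q) :
    cpRe.symm ((a ⊗ₜ[R] (b ⊗ₜ[R] c)) ⊗ₜ[R] (x ⊗ₜ[R] (y ⊗ₜ[R] z))) =
      (a ⊗ₜ[R] x) ⊗ₜ[R] ((b ⊗ₜ[R] y) ⊗ₜ[R] (c ⊗ₜ[R] z)) := rfl

/-- The multiplication `P^{⊗3} ⊗ Q^{⊗3} → Sym³(P ⊗ Q)`. -/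
noncomputable def cpMu : (P ⊗[R] (P ⊗[R] P)) ⊗[R] (Q ⊗[R] (Q ⊗[R] Q)) →ₗ[R]
    SymCube R (P ⊗[R] Q) := (sq3 R (P ⊗[R] Q)).mkQ ∘ₗ cpRe.symm.toLinearMap

@[simp] lemma cpMu_tmul (a b c : P) (x y z : Q) :
    cpMu ((a ⊗ₜ[R] (b ⊗ₜ[R] c)) ⊗ₜ[R] (x ⊗ₜ[R] (y ⊗ₜ[R] z))) =
      cpM3 (R := R) (a ⊗ₜ[R] x) (b ⊗ₜ[R] y) (c ⊗ₜ[R] z) := rfl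

/-- Two-sided descent to a tensor product of quotients. -/
noncomputable def cpDescend (A : Submodule R M) (B : Submodule R N) (f : M ⊗[R] N →ₗ[R] P)
    (hA : ∀ a ∈ A, ∀ n, f (a ⊗ₜ[R] n) = 0) (hB : ∀ m, ∀ b ∈ B, f (m ⊗ₜ[R] b) = 0) :
    (M ⧸ A) ⊗[R] (N ⧸ B) →ₗ[R] P :=
  TensorProduct.lift (LinearMap.flip (Submodule.liftQ B (LinearMap.flip
    (Submodule.liftQ A (TensorProduct.curry f) (by
      intro a ha
      exact LinearMap.ext fun n => hA a ha n))) (by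
      intro b hb
      refine LinearMap.ext fun m => ?_
      obtain ⟨m, rfl⟩ := Submodule.Quotient.mk_surjective _ m
      exact hB m b hb)))

lemma cpDescend_mk (A : Submodule R M) (B : Submodule R N) (f : M ⊗[R] N →ₗ[R] P)
    (hA : ∀ a ∈ A, ∀ n, f (a ⊗ₜ[R] n) = 0) (hB : ∀ m, ∀ b ∈ B, f (m ⊗ₜ[R] b) = 0) (m : M) (n : N) :
    cpDescend A B f hA hB ((Submodule.Quotient.mk m) ⊗ₜ[R] (Submodule.Quotient.mk n)) =
      f (m ⊗ₜ[R] n) := rfl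

lemma cp_ker_of_gens {S : Set M} (g : M →ₗ[R] P) (h : ∀ s ∈ S, g s = 0) :
    ∀ a ∈ Submodule.span R S, g a = 0 := by
  have : Submodule.span R S ≤ LinearMap.ker g := Submodule.span_le.2 h
  exact this

lemma cp_vanish_left {S : Set (P ⊗[R] (P ⊗[R] P))}
    (f : (P ⊗[R] (P ⊗[R] P)) ⊗[R] (Q ⊗[R] (Q ⊗[R] Q)) →ₗ[R] N)
    (h : ∀ s ∈ S, ∀ x y z : Q, f (s ⊗ₜ[R] (x ⊗ₜ[R] (y ⊗ₜ[R] z))) = 0) :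
    ∀ s ∈ Submodule.span R S, ∀ n, f (s ⊗ₜ[R] n) = 0 := by
  intro s hs n
  refine cp_ker_of_gens (f ∘ₗ (TensorProduct.mk R _ _).flip n) ?_ s hs
  intro s hs
  suffices h : (f ∘ₗ (TensorProduct.mk R _ _) s) = 0 from LinearMap.congr_fun h n
  ext x y z
  exact h s hs x y z

lemma cp_vanish_right {S : Set (Q ⊗[R] (Q ⊗[R] Q))}
    (f : (P ⊗[R] (P ⊗[R] P)) ⊗[R] (Q ⊗[R] (Q ⊗[R] Q)) →ₗ[R] N)
    (h : ∀ s ∈ S, ∀ a b c : P, f ((a ⊗ₜ[R] (b ⊗ₜ[R] c)) ⊗ₜ[R] s) = 0) :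
    ∀ n, ∀ s ∈ Submodule.span R S, f (n ⊗ₜ[R] s) = 0 := by
  intro n s hs
  refine cp_ker_of_gens (f ∘ₗ (TensorProduct.mk R _ _) n) ?_ s hs
  intro s hs
  suffices h : (f ∘ₗ (TensorProduct.mk R _ _).flip s) = 0 from LinearMap.congr_fun h n
  ext a b c
  exact h s hs a b c

lemma cp_ext_quot {A : Submodule R (P ⊗[R] (P ⊗[R] P))} {B : Submodule R (Q ⊗[R] (Q ⊗[R] Q))}
    {f g : ((P ⊗[R] (P ⊗[R] P)) ⧸ A) ⊗[R] ((Q ⊗[R] (Q ⊗[R] Q)) ⧸ B) →ₗ[R] N}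
    (h : ∀ (a b c : P) (x y z : Q),
      f ((Submodule.Quotient.mk (a ⊗ₜ[R] (b ⊗ₜ[R] c))) ⊗ₜ[R]
        (Submodule.Quotient.mk (x ⊗ₜ[R] (y ⊗ₜ[R] z)))) =
      g ((Submodule.Quotient.mk (a ⊗ₜ[R] (b ⊗ₜ[R] c))) ⊗ₜ[R]
        (Submodule.Quotient.mk (x ⊗ₜ[R] (y ⊗ₜ[R] z))))) : f = g := by
  have key : f ∘ₗ TensorProduct.map A.mkQ B.mkQ = g ∘ₗ TensorProduct.map A.mkQ B.mkQ := by
    ext a b c x y z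
    exact h a b c x y z
  apply TensorProduct.ext'
  intro s t
  obtain ⟨s, rfl⟩ := Submodule.Quotient.mk_surjective _ s
  obtain ⟨t, rfl⟩ := Submodule.Quotient.mk_surjective _ t
  exact LinearMap.congr_fun key (s ⊗ₜ[R] t)

lemma cp_sum_perm {A : Type*} [AddCommGroup A] (f : Equiv.Perm (Fin 3) → A) :
    ∑ σ, f σ = f 1 + f (Equiv.swap 0 1) + f (Equiv.swap 0 2) + f (Equiv.swap 1 2)
      + f (Equiv.swap 0 1 * Equiv.swap 1 2) + f (Equiv.swap 1 2 * Equiv.swap 0 1) := by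
  have : (Finset.univ : Finset (Equiv.Perm (Fin 3))) = {1, Equiv.swap 0 1, Equiv.swap 0 2,
    Equiv.swap 1 2, Equiv.swap 0 1 * Equiv.swap 1 2, Equiv.swap 1 2 * Equiv.swap 0 1} := by decide
  rw [this]
  repeat rw [Finset.sum_insert (by decide)]
  rw [Finset.sum_singleton]
  abel

end Basics

section Part3
variable {R P Q : Type u} [CommRing R] [AddCommGroup P] [Module R P] [AddCommGroup Q] [Module R Q]

lemma cp_det2 (a b c : P) (x y z : Q) : det2Elem R P Q a b c x y z =
    cpM3 (a ⊗ₜ[R] x) (b ⊗ₜ[R] y) (c ⊗ₜ[R] z) - cpM3 (a ⊗ₜ[R] y) (b ⊗ₜ[R] x) (c ⊗ₜ[R] z) := rfl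

lemma cp_det3 (p : Fin 3 → P) (q : Fin 3 → Q) : detElem R P Q p q =
    cpM3 (p 0 ⊗ₜ[R] q 0) (p 1 ⊗ₜ[R] q 1) (p 2 ⊗ₜ[R] q 2)
    - cpM3 (p 0 ⊗ₜ[R] q 1) (p 1 ⊗ₜ[R] q 0) (p 2 ⊗ₜ[R] q 2)
    - cpM3 (p 0 ⊗ₜ[R] q 2) (p 1 ⊗ₜ[R] q 1) (p 2 ⊗ₜ[R] q 0)
    - cpM3 (p 0 ⊗ₜ[R] q 0) (p 1 ⊗ₜ[R] q 2) (p 2 ⊗ₜ[R] q 1)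
    + cpM3 (p 0 ⊗ₜ[R] q 1) (p 1 ⊗ₜ[R] q 2) (p 2 ⊗ₜ[R] q 0)
    + cpM3 (p 0 ⊗ₜ[R] q 2) (p 1 ⊗ₜ[R] q 0) (p 2 ⊗ₜ[R] q 1) := by
  have e1 : (Equiv.swap (0 : Fin 3) 1) 2 = 2 := by decide
  have e2 : (Equiv.swap (0 : Fin 3) 2) 1 = 1 := by decide
  have e3 : (Equiv.swap (1 : Fin 3) 2) 0 = 0 := by decide
  have n1 : (0 : Fin 3) ≠ 1 := by decide
  have n2 : (0 : Fin 3) ≠ 2 := by decide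
  have n3 : (1 : Fin 3) ≠ 2 := by decide
  rw [detElem, cp_sum_perm]
  simp only [Equiv.Perm.sign_one, Equiv.Perm.sign_mul, Equiv.Perm.sign_swap n1,
    Equiv.Perm.sign_swap n2, Equiv.Perm.sign_swap n3, Equiv.Perm.coe_one, id, Equiv.Perm.mul_apply,
    Equiv.swap_apply_left, Equiv.swap_apply_right, e1, e2, e3, Submodule.Quotient.mk_add]
  simp only [Units.val_one, Units.val_neg, mul_neg, neg_neg, mul_one, one_smul, neg_smul,
    Submodule.Quotient.mk_neg, cpM3]
  abel

lemma cp_det3_eq_q (p : Fin 3 → P) (q : Fin 3 → Q) : detElem R P Q p q =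
    det2Elem R P Q (p 0) (p 1) (p 2) (q 0) (q 1) (q 2)
    + det2Elem R P Q (p 0) (p 1) (p 2) (q 1) (q 2) (q 0)
    + det2Elem R P Q (p 0) (p 1) (p 2) (q 2) (q 0) (q 1) := by
  simp only [cp_det3, cp_det2]
  abel

lemma cp_det3_eq_p (p : Fin 3 → P) (q : Fin 3 → Q) : detElem R P Q p q =
    det2Elem R P Q (p 0) (p 1) (p 2) (q 0) (q 1) (q 2)
    + det2Elem R P Q (p 1) (p 2) (p 0) (q 0) (q 1) (q 2)
    + det2Elem R P Q (p 2) (p 0) (p 1) (q 0) (q 1) (q 2) := by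
  simp only [cp_det3, cp_det2]
  rw [← cpM3_rot (p 0 ⊗ₜ[R] q 2) (p 1 ⊗ₜ[R] q 0) (p 2 ⊗ₜ[R] q 1),
    ← cpM3_rot (p 0 ⊗ₜ[R] q 2) (p 1 ⊗ₜ[R] q 1) (p 2 ⊗ₜ[R] q 0),
    cpM3_rot (p 2 ⊗ₜ[R] q 0) (p 0 ⊗ₜ[R] q 1) (p 1 ⊗ₜ[R] q 2),
    cpM3_rot (p 2 ⊗ₜ[R] q 1) (p 0 ⊗ₜ[R] q 0) (p 1 ⊗ₜ[R] q 2)]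
  abel

lemma cp_M21_eq : M21 R P Q = Submodule.span R
    {x | ∃ p1 p2 p3 : P, ∃ q1 q2 q3 : Q, x = det2Elem R P Q p1 p2 p3 q1 q2 q3} := by
  rw [M21, sup_eq_right, M3, Submodule.span_le]
  rintro _ ⟨p, q, rfl⟩
  rw [cp_det3_eq_q]
  refine add_mem (add_mem ?_ ?_) ?_ <;>
    exact Submodule.subset_span ⟨_, _, _, _, _, _, rfl⟩

lemma cp_det2_mem (a b c : P) (x y z : Q) : det2Elem R P Q a b c x y z ∈ M21 R P Q := by
  rw [cp_M21_eq]
  exact Submodule.subset_span ⟨_, _, _, _, _, _, rfl⟩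

lemma cp_det3_mem (p : Fin 3 → P) (q : Fin 3 → Q) : detElem R P Q p q ∈ M3 R P Q :=
  Submodule.subset_span ⟨_, _, rfl⟩

variable (R P Q)

/-- The quotient map `Sym³(P ⊗ Q) → Sym³ P ⊗ Sym³ Q`. -/
noncomputable def cpQuot : SymCube R (P ⊗[R] Q) →ₗ[R] SymCube R P ⊗[R] SymCube R Q :=
  cpSymLift (TensorProduct.map (sq3 R P).mkQ (sq3 R Q).mkQ ∘ₗ cpRe.toLinearMap)
    (by
      ext a x b y c z
      exact congrArg₂ (fun s t => s ⊗ₜ[R] t) (cpM3_swap12 b a c) (cpM3_swap12 y x z))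
    (by
      ext a x b y c z
      exact congrArg₂ (fun s t => s ⊗ₜ[R] t) (cpM3_swap23 a c b) (cpM3_swap23 x z y))

lemma cpQuot_m3 (a b c : P) (x y z : Q) :
    cpQuot R P Q (cpM3 (a ⊗ₜ[R] x) (b ⊗ₜ[R] y) (c ⊗ₜ[R] z)) = cpM3 a b c ⊗ₜ[R] cpM3 x y z := rfl

/-- The third graded piece, forward map. -/
noncomputable def cpFwd : (SymCube R (P ⊗[R] Q) ⧸ M21 R P Q) →ₗ[R] SymCube R P ⊗[R] SymCube R Q :=
  Submodule.liftQ _ (cpQuot R P Q) (by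
    rw [cp_M21_eq, Submodule.span_le]
    rintro _ ⟨a, b, c, x, y, z, rfl⟩
    rw [SetLike.mem_coe, LinearMap.mem_ker, cp_det2, map_sub, cpQuot_m3, cpQuot_m3,
      cpM3_swap12 y x z, sub_self])

lemma cp_bwd_q (a b c : P) (x y z : Q) :
    (M21 R P Q).mkQ (cpM3 (a ⊗ₜ[R] x) (b ⊗ₜ[R] y) (c ⊗ₜ[R] z)) =
    (M21 R P Q).mkQ (cpM3 (a ⊗ₜ[R] y) (b ⊗ₜ[R] x) (c ⊗ₜ[R] z)) :=
  (Submodule.Quotient.eq _).2 (cp_det2_mem a b c x y z)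

lemma cp_bwd_q2 (a b c : P) (x y z : Q) :
    (M21 R P Q).mkQ (cpM3 (a ⊗ₜ[R] x) (b ⊗ₜ[R] y) (c ⊗ₜ[R] z)) =
    (M21 R P Q).mkQ (cpM3 (a ⊗ₜ[R] x) (b ⊗ₜ[R] z) (c ⊗ₜ[R] y)) := by
  rw [cpM3_rot, cp_bwd_q, ← cpM3_rot]

/-- The third graded piece, backward map. -/
noncomputable def cpBwd : SymCube R P ⊗[R] SymCube R Q →ₗ[R] (SymCube R (P ⊗[R] Q) ⧸ M21 R P Q) :=
  cpDescend (sq3 R P) (sq3 R Q) ((M21 R P Q).mkQ ∘ₗ cpMu)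
    (cp_vanish_left _ (by
      rintro _ (⟨a, b, c, rfl⟩ | ⟨a, b, c, rfl⟩) x y z
      · simp only [TensorProduct.sub_tmul, map_sub, LinearMap.comp_apply, cpMu_tmul]
        rw [cpM3_swap12 (b ⊗ₜ[R] x), cp_bwd_q R P Q a b c y x z, sub_self]
      · simp only [TensorProduct.sub_tmul, map_sub, LinearMap.comp_apply, cpMu_tmul]
        rw [cpM3_swap23 (a ⊗ₜ[R] x) (c ⊗ₜ[R] y), cp_bwd_q2 R P Q a b c x z y, sub_self]))
    (cp_vanish_right _ (by
      rintro _ (⟨x, y, z, rfl⟩ | ⟨x, y, z, rfl⟩) a b c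
      · simp only [TensorProduct.tmul_sub, map_sub, LinearMap.comp_apply, cpMu_tmul]
        rw [cp_bwd_q R P Q a b c y x z, sub_self]
      · simp only [TensorProduct.tmul_sub, map_sub, LinearMap.comp_apply, cpMu_tmul]
        rw [cp_bwd_q2 R P Q a b c x z y, sub_self]))

/-- The third graded piece. -/
noncomputable def cpEquiv3 : (SymCube R (P ⊗[R] Q) ⧸ M21 R P Q) ≃ₗ[R]
    SymCube R P ⊗[R] SymCube R Q :=
  LinearEquiv.ofLinearMap (cpFwd R P Q) (cpBwd R P Q)
    (cp_ext_quot fun a b c x y z => rfl)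
    (by
      ext a x b y c z
      rfl)

end Part3

section Part1
variable {R : Type*} [CommRing R] {M N : Type*} [AddCommGroup M] [Module R M]
  [AddCommGroup N] [Module R N]

variable (R M) in
/-- The universal trilinear map. -/
noncomputable def cpTri : MultilinearMap R (fun _ : Fin 3 => M) (M ⊗[R] (M ⊗[R] M)) :=
  MultilinearMap.mk' (fun p => p 0 ⊗ₜ[R] (p 1 ⊗ₜ[R] p 2))
    (by
      intro m i x y
      fin_cases i <;> simp [Function.update, TensorProduct.add_tmul, TensorProduct.tmul_add])
    (by
      intro m i c x
      fin_cases i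
      · simp [Function.update, TensorProduct.smul_tmul']
      · simp [Function.update, ← TensorProduct.smul_tmul', TensorProduct.tmul_smul]
      · simp [Function.update, TensorProduct.tmul_smul])

lemma cpTri_apply (p : Fin 3 → M) : cpTri R M p = p 0 ⊗ₜ[R] (p 1 ⊗ₜ[R] p 2) := rfl

variable (R M) in
/-- The antisymmetrization `Λ³ M → M^{⊗3}`. -/
noncomputable def cpAlt : ⋀[R]^3 M →ₗ[R] M ⊗[R] (M ⊗[R] M) :=
  exteriorPower.alternatingMapLinearEquiv (MultilinearMap.alternatization (cpTri R M))

lemma cpAlt_ι (p : Fin 3 → M) : cpAlt R M (exteriorPower.ιMulti R 3 p) =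
    p 0 ⊗ₜ[R] (p 1 ⊗ₜ[R] p 2) - p 1 ⊗ₜ[R] (p 0 ⊗ₜ[R] p 2) - p 2 ⊗ₜ[R] (p 1 ⊗ₜ[R] p 0)
    - p 0 ⊗ₜ[R] (p 2 ⊗ₜ[R] p 1) + p 1 ⊗ₜ[R] (p 2 ⊗ₜ[R] p 0) + p 2 ⊗ₜ[R] (p 0 ⊗ₜ[R] p 1) := by
  have e1 : (Equiv.swap (0 : Fin 3) 1) 2 = 2 := by decide
  have e2 : (Equiv.swap (0 : Fin 3) 2) 1 = 1 := by decide
  have e3 : (Equiv.swap (1 : Fin 3) 2) 0 = 0 := by decide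
  have n1 : (0 : Fin 3) ≠ 1 := by decide
  have n2 : (0 : Fin 3) ≠ 2 := by decide
  have n3 : (1 : Fin 3) ≠ 2 := by decide
  rw [cpAlt, exteriorPower.alternatingMapLinearEquiv_apply_ιMulti,
    MultilinearMap.alternatization_apply, cp_sum_perm]
  simp only [Equiv.Perm.sign_one, Equiv.Perm.sign_mul, Equiv.Perm.sign_swap n1,
    Equiv.Perm.sign_swap n2, Equiv.Perm.sign_swap n3, Equiv.Perm.coe_one, id, Equiv.Perm.mul_apply,
    Equiv.swap_apply_left, Equiv.swap_apply_right, e1, e2, e3, MultilinearMap.domDomCongr_apply,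
    cpTri_apply, Units.smul_def]
  simp only [Units.val_one, Units.val_neg, mul_neg, neg_neg, mul_one, one_smul, neg_smul]
  abel

lemma cpAlt_natural (f : M →ₗ[R] N) (x : ⋀[R]^3 M) :
    cpAlt R N (exteriorPower.map 3 f x) =
      TensorProduct.map f (TensorProduct.map f f) (cpAlt R M x) := by
  suffices h : cpAlt R N ∘ₗ exteriorPower.map 3 f =
      TensorProduct.map f (TensorProduct.map f f) ∘ₗ cpAlt R M from LinearMap.congr_fun h x
  ext p
  simp [cpAlt_ι]

lemma cp_ιMulti_perm (σ : Equiv.Perm (Fin 3)) (p : Fin 3 → M) :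
    exteriorPower.ιMulti R 3 p = Equiv.Perm.sign σ • exteriorPower.ιMulti R 3 (p ∘ σ) := by
  rw [AlternatingMap.map_perm, smul_smul, Int.units_mul_self, one_smul]

lemma cpAlt_retract_free {ι : Type*} (b : Module.Basis ι R M) :
    ∃ r : M ⊗[R] (M ⊗[R] M) →ₗ[R] ⋀[R]^3 M, r ∘ₗ cpAlt R M = LinearMap.id := by
  classical
  let _ : LinearOrder ι := linearOrderOfSTO WellOrderingRel
  let r : M ⊗[R] (M ⊗[R] M) →ₗ[R] ⋀[R]^3 M :=
    (b.tensorProduct (b.tensorProduct b)).constr R (fun t : ι × ι × ι =>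
      if t.1 < t.2.1 ∧ t.2.1 < t.2.2 then
        exteriorPower.ιMulti R 3 ![b t.1, b t.2.1, b t.2.2] else 0)
  have hr : ∀ i j k, r (b i ⊗ₜ[R] (b j ⊗ₜ[R] b k)) = if i < j ∧ j < k then
        exteriorPower.ιMulti R 3 ![b i, b j, b k] else 0 := by
    intro i j k
    rw [← Module.Basis.tensorProduct_apply, ← Module.Basis.tensorProduct_apply,
      Module.Basis.constr_basis]
  refine ⟨r, ?_⟩
  apply exteriorPower.linearMap_ext
  refine Module.Basis.ext_alternating b fun v hv => ?_
  have h01 : v 0 ≠ v 1 := fun h => by simpa using hv h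
  have h02 : v 0 ≠ v 2 := fun h => by simpa using hv h
  have h12 : v 1 ≠ v 2 := fun h => by simpa using hv h
  have hp : (fun i => b (v i)) = ![b (v 0), b (v 1), b (v 2)] := by
    ext i; fin_cases i <;> rfl
  simp only [LinearMap.compAlternatingMap_apply, LinearMap.comp_apply, cpAlt_ι, map_add, map_sub,
    hr, LinearMap.id_apply]
  rw [hp]
  have s01 := cp_ιMulti_perm (R := R) (Equiv.swap 0 1) ![b (v 0), b (v 1), b (v 2)]
  have s02 := cp_ιMulti_perm (R := R) (Equiv.swap 0 2) ![b (v 0), b (v 1), b (v 2)]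
  have s12 := cp_ιMulti_perm (R := R) (Equiv.swap 1 2) ![b (v 0), b (v 1), b (v 2)]
  have s3 := cp_ιMulti_perm (R := R) (Equiv.swap 0 1 * Equiv.swap 1 2)
    ![b (v 0), b (v 1), b (v 2)]
  have s4 := cp_ιMulti_perm (R := R) (Equiv.swap 1 2 * Equiv.swap 0 1)
    ![b (v 0), b (v 1), b (v 2)]
  rw [show ![b (v 0), b (v 1), b (v 2)] ∘ (Equiv.swap (0 : Fin 3) 1) =
    ![b (v 1), b (v 0), b (v 2)] by ext i; fin_cases i <;> rfl,
    Equiv.Perm.sign_swap (by decide), Units.neg_smul, one_smul] at s01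
  rw [show ![b (v 0), b (v 1), b (v 2)] ∘ (Equiv.swap (0 : Fin 3) 2) =
    ![b (v 2), b (v 1), b (v 0)] by ext i; fin_cases i <;> rfl,
    Equiv.Perm.sign_swap (by decide), Units.neg_smul, one_smul] at s02
  rw [show ![b (v 0), b (v 1), b (v 2)] ∘ (Equiv.swap (1 : Fin 3) 2) =
    ![b (v 0), b (v 2), b (v 1)] by ext i; fin_cases i <;> rfl,
    Equiv.Perm.sign_swap (by decide), Units.neg_smul, one_smul] at s12
  rw [show ![b (v 0), b (v 1), b (v 2)] ∘ (Equiv.swap (0 : Fin 3) 1 * Equiv.swap 1 2 :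
    Equiv.Perm (Fin 3)) = ![b (v 1), b (v 2), b (v 0)] by ext i; fin_cases i <;> rfl,
    Equiv.Perm.sign_mul, Equiv.Perm.sign_swap (by decide), Equiv.Perm.sign_swap (by decide),
    neg_mul_neg, one_mul, one_smul] at s3
  rw [show ![b (v 0), b (v 1), b (v 2)] ∘ (Equiv.swap (1 : Fin 3) 2 * Equiv.swap 0 1 :
    Equiv.Perm (Fin 3)) = ![b (v 2), b (v 0), b (v 1)] by ext i; fin_cases i <;> rfl,
    Equiv.Perm.sign_mul, Equiv.Perm.sign_swap (by decide), Equiv.Perm.sign_swap (by decide),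
    neg_mul_neg, one_mul, one_smul] at s4
  rcases lt_or_gt_of_ne h01 with h | h <;> rcases lt_or_gt_of_ne h02 with h' | h' <;>
    rcases lt_or_gt_of_ne h12 with h'' | h'' <;>
    first
    | exact absurd (h.trans h'') h'.asymm
    | exact absurd (h''.trans h) h'.asymm
    | simp only [h, h', h'', h.asymm, h'.asymm, h''.asymm, and_true, and_false, if_true, if_false,
        sub_zero, zero_sub, add_zero, zero_add, and_self]
      first
      | done
      | exact s01.symm
      | exact s02.symm
      | exact s12.symm
      | exact s3.symm
      | exact s4.symm

lemma cpAlt_retract [Module.Projective R M] :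
    ∃ r : M ⊗[R] (M ⊗[R] M) →ₗ[R] ⋀[R]^3 M, r ∘ₗ cpAlt R M = LinearMap.id := by
  obtain ⟨s, hs⟩ := Module.Projective.out (R := R) (P := M)
  set π := Finsupp.linearCombination R (id : M → M)
  have hπ : π ∘ₗ s = LinearMap.id := LinearMap.ext hs
  obtain ⟨r, hr⟩ := cpAlt_retract_free (R := R) (M := M →₀ R) Finsupp.basisSingleOne
  refine ⟨exteriorPower.map 3 π ∘ₗ r ∘ₗ TensorProduct.map s (TensorProduct.map s s), ?_⟩
  refine LinearMap.ext fun x => ?_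
  have h1 := LinearMap.congr_fun hr (exteriorPower.map 3 s x)
  simp only [LinearMap.comp_apply, LinearMap.id_apply] at h1 ⊢
  rw [← cpAlt_natural, h1, ← LinearMap.comp_apply, ← exteriorPower.map_comp, hπ, exteriorPower.map_id,
    LinearMap.id_apply]

end Part1

section Part1b
variable (R P Q : Type u) [CommRing R] [AddCommGroup P] [Module R P] [AddCommGroup Q] [Module R Q]

lemma cp_det2_self (a c : P) (x y z : Q) : det2Elem R P Q a a c x y z = 0 := by
  rw [cp_det2, cpM3_swap12, sub_self]

lemma cp_det2_self_q (a b c : P) (x z : Q) : det2Elem R P Q a b c x x z = 0 := by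
  rw [cp_det2, sub_self]

lemma cp_det2_swap (a b c : P) (x y z : Q) :
    det2Elem R P Q a b c x y z = - det2Elem R P Q b a c x y z := by
  rw [cp_det2, cp_det2, cpM3_swap12, cpM3_swap12 (a ⊗ₜ[R] y), neg_sub]

/-- Auxiliary map for the determinant map. -/
noncomputable def cpDetAux : P ⊗[R] (P ⊗[R] P) →ₗ[R] (⋀[R]^3 Q →ₗ[R] SymCube R (P ⊗[R] Q)) :=
  TensorProduct.curry (cpMu ∘ₗ LinearMap.lTensor _ (cpAlt R Q))

lemma cpDetAux_apply (p : Fin 3 → P) (q : Fin 3 → Q) :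
    cpDetAux R P Q (p 0 ⊗ₜ[R] (p 1 ⊗ₜ[R] p 2)) (exteriorPower.ιMulti R 3 q) =
      detElem R P Q p q := by
  simp only [cpDetAux, TensorProduct.curry_apply, LinearMap.comp_apply, LinearMap.lTensor_tmul,
    cpAlt_ι, cp_det3, TensorProduct.tmul_add, TensorProduct.tmul_sub, map_add, map_sub, cpMu_tmul]

/-- The determinant as an alternating map in the first variable. -/
noncomputable def cpDetAlt : P [⋀^Fin 3]→ₗ[R] (⋀[R]^3 Q →ₗ[R] SymCube R (P ⊗[R] Q)) :=
  { (cpDetAux R P Q).compMultilinearMap (cpTri R P) with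
    map_eq_zero_of_eq' := by
      intro v i j hv hij
      apply exteriorPower.linearMap_ext
      ext q
      refine (cpDetAux_apply R P Q v q).trans ?_
      rw [cp_det3_eq_p]
      simp only [LinearMap.compAlternatingMap_apply, LinearMap.zero_apply]
      have key : v 0 = v 1 ∨ v 0 = v 2 ∨ v 1 = v 2 := by
        fin_cases i <;> fin_cases j <;> simp_all
      rcases key with h | h | h
      · rw [h, cp_det2_self, cp_det2_swap R P Q (v 2)]
        abel
      · rw [h, cp_det2_self, cp_det2_swap R P Q (v 2)]
        abel
      · rw [h, cp_det2_self, cp_det2_swap R P Q (v 0)]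
        abel }

/-- The determinant map. -/
noncomputable def cpDet : (⋀[R]^3 P) ⊗[R] (⋀[R]^3 Q) →ₗ[R] SymCube R (P ⊗[R] Q) :=
  TensorProduct.lift (exteriorPower.alternatingMapLinearEquiv (cpDetAlt R P Q))

lemma cpDet_ι (p : Fin 3 → P) (q : Fin 3 → Q) :
    cpDet R P Q (exteriorPower.ιMulti R 3 p ⊗ₜ[R] exteriorPower.ιMulti R 3 q) =
      detElem R P Q p q := by
  rw [cpDet, TensorProduct.lift.tmul, exteriorPower.alternatingMapLinearEquiv_apply_ιMulti]
  exact cpDetAux_apply R P Q p q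

lemma cpDet_range : LinearMap.range (cpDet R P Q) = M3 R P Q := by
  apply le_antisymm
  · rw [LinearMap.range_eq_map, ← TensorProduct.span_tmul_eq_top, Submodule.map_span,
      Submodule.span_le]
    rintro _ ⟨_, ⟨s, t, rfl⟩, rfl⟩
    have h1 : ∀ (p : Fin 3 → P) (t : ⋀[R]^3 Q),
        cpDet R P Q (exteriorPower.ιMulti R 3 p ⊗ₜ[R] t) ∈ M3 R P Q := by
      intro p t
      have : t ∈ Submodule.span R (Set.range (exteriorPower.ιMulti R 3 (M := Q))) := by
        rw [exteriorPower.ιMulti_span]; trivial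
      induction this using Submodule.span_induction with
      | mem x h =>
        obtain ⟨q, rfl⟩ := h
        rw [cpDet_ι]
        exact cp_det3_mem p q
      | zero => simp
      | add x y _ _ hx hy => rw [TensorProduct.tmul_add, map_add]; exact add_mem hx hy
      | smul c x _ hx => rw [TensorProduct.tmul_smul, map_smul]; exact Submodule.smul_mem _ _ hx
    have : s ∈ Submodule.span R (Set.range (exteriorPower.ιMulti R 3 (M := P))) := by
      rw [exteriorPower.ιMulti_span]; trivial
    show cpDet R P Q (s ⊗ₜ[R] t) ∈ M3 R P Q
    induction this using Submodule.span_induction with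
    | mem x h =>
      obtain ⟨p, rfl⟩ := h
      exact h1 p t
    | zero => simp
    | add x y _ _ hx hy => rw [TensorProduct.add_tmul, map_add]; exact add_mem hx hy
    | smul c x _ hx =>
      rw [← TensorProduct.smul_tmul', map_smul]; exact Submodule.smul_mem _ _ hx
  · rw [M3, Submodule.span_le]
    rintro _ ⟨p, q, rfl⟩
    exact ⟨_, cpDet_ι R P Q p q⟩

/-- Symmetrization `Sym³(P ⊗ Q) → P^{⊗3} ⊗ Q^{⊗3}`. -/
noncomputable def cpSym : SymCube R (P ⊗[R] Q) →ₗ[R]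
    (P ⊗[R] (P ⊗[R] P)) ⊗[R] (Q ⊗[R] (Q ⊗[R] Q)) :=
  cpSymLift (cpRe.toLinearMap ∘ₗ (LinearMap.id + cpS12 + cpS23 + cpS12 ∘ₗ cpS23 + cpS23 ∘ₗ cpS12
      + cpS12 ∘ₗ cpS23 ∘ₗ cpS12))
    (by
      ext a x b y c z
      simp only [TensorProduct.AlgebraTensorModule.curry_apply,
          LinearMap.restrictScalars_self, TensorProduct.curry_apply, LinearMap.comp_apply,
          LinearMap.add_apply, cpS12_tmul, cpS23_tmul, LinearMap.id_apply, map_add]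
      abel)
    (by
      ext a x b y c z
      simp only [TensorProduct.AlgebraTensorModule.curry_apply,
          LinearMap.restrictScalars_self, TensorProduct.curry_apply, LinearMap.comp_apply,
          LinearMap.add_apply, cpS12_tmul, cpS23_tmul, LinearMap.id_apply, map_add]
      abel)

lemma cpSym_m3 (a b c : P) (x y z : Q) :
    cpSym R P Q (cpM3 (a ⊗ₜ[R] x) (b ⊗ₜ[R] y) (c ⊗ₜ[R] z)) =
      (a ⊗ₜ[R] (b ⊗ₜ[R] c)) ⊗ₜ[R] (x ⊗ₜ[R] (y ⊗ₜ[R] z))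
      + (b ⊗ₜ[R] (a ⊗ₜ[R] c)) ⊗ₜ[R] (y ⊗ₜ[R] (x ⊗ₜ[R] z))
      + (a ⊗ₜ[R] (c ⊗ₜ[R] b)) ⊗ₜ[R] (x ⊗ₜ[R] (z ⊗ₜ[R] y))
      + (c ⊗ₜ[R] (a ⊗ₜ[R] b)) ⊗ₜ[R] (z ⊗ₜ[R] (x ⊗ₜ[R] y))
      + (b ⊗ₜ[R] (c ⊗ₜ[R] a)) ⊗ₜ[R] (y ⊗ₜ[R] (z ⊗ₜ[R] x))
      + (c ⊗ₜ[R] (b ⊗ₜ[R] a)) ⊗ₜ[R] (z ⊗ₜ[R] (y ⊗ₜ[R] x)) := by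
  rw [cpSym, cpSymLift_m3]
  simp only [LinearMap.comp_apply, LinearMap.add_apply, cpS12_tmul, cpS23_tmul, LinearMap.id_apply,
    map_add, LinearEquiv.coe_coe, cpRe_tmul]

set_option maxHeartbeats 1000000 in
lemma cpSym_det : cpSym R P Q ∘ₗ cpDet R P Q = TensorProduct.map (cpAlt R P) (cpAlt R Q) := by
  apply TensorProduct.ext'
  intro u t
  suffices h : (cpSym R P Q ∘ₗ cpDet R P Q) ∘ₗ (TensorProduct.mk R _ _).flip t =
      TensorProduct.map (cpAlt R P) (cpAlt R Q) ∘ₗ (TensorProduct.mk R _ _).flip t from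
    LinearMap.congr_fun h u
  apply exteriorPower.linearMap_ext
  ext p : 1
  suffices h : (cpSym R P Q ∘ₗ cpDet R P Q) ∘ₗ TensorProduct.mk R _ _
        (exteriorPower.ιMulti R 3 p) =
      TensorProduct.map (cpAlt R P) (cpAlt R Q) ∘ₗ TensorProduct.mk R _ _
        (exteriorPower.ιMulti R 3 p) from LinearMap.congr_fun h t
  apply exteriorPower.linearMap_ext
  ext q : 1
  show cpSym R P Q (cpDet R P Q (exteriorPower.ιMulti R 3 p ⊗ₜ[R] exteriorPower.ιMulti R 3 q)) =
    cpAlt R P (exteriorPower.ιMulti R 3 p) ⊗ₜ[R] cpAlt R Q (exteriorPower.ιMulti R 3 q)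
  rw [cpDet_ι, cp_det3]
  simp only [map_add, map_sub, cpSym_m3, cpAlt_ι, TensorProduct.add_tmul, TensorProduct.sub_tmul,
    TensorProduct.tmul_add, TensorProduct.tmul_sub]
  abel

lemma cpEquiv1 [Module.Projective R P] [Module.Projective R Q] :
    Nonempty ((M3 R P Q) ≃ₗ[R] ((⋀[R]^3 P) ⊗[R] (⋀[R]^3 Q))) := by
  obtain ⟨r, hr⟩ := cpAlt_retract (R := R) (M := P)
  obtain ⟨s, hs⟩ := cpAlt_retract (R := R) (M := Q)
  have hinj : Function.Injective (cpDet R P Q) := by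
    have h : (TensorProduct.map r s ∘ₗ cpSym R P Q) ∘ₗ cpDet R P Q = LinearMap.id := by
      rw [LinearMap.comp_assoc, cpSym_det, ← TensorProduct.map_comp, hr, hs, TensorProduct.map_id]
    exact Function.LeftInverse.injective (g := TensorProduct.map r s ∘ₗ cpSym R P Q)
      (LinearMap.congr_fun h)
  exact ⟨((LinearEquiv.ofInjective _ hinj).trans
    (LinearEquiv.ofEq _ _ (cpDet_range R P Q))).symm⟩

end Part1b

section Part2
variable {R : Type*} [CommRing R] {M N : Type*} [AddCommGroup M] [Module R M]
  [AddCommGroup N] [Module R N]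

/-- The product in the symmetric square. -/
def cpM2 (a b : M) : SymSq R M := Submodule.Quotient.mk (a ⊗ₜ[R] b)

lemma cpM2_comm (a b : M) : cpM2 (R := R) a b = cpM2 b a :=
  (Submodule.Quotient.eq _).2 (Submodule.subset_span ⟨a, b, rfl⟩)

variable (R M) in
/-- Relations presenting the Schur functor. -/
def cpRel : Submodule R (M ⊗[R] (M ⊗[R] M)) :=
  Submodule.span R
    ({x | ∃ a c : M, x = a ⊗ₜ[R] (a ⊗ₜ[R] c)} ∪
     {x | ∃ a b c : M, x = a ⊗ₜ[R] (b ⊗ₜ[R] c) + b ⊗ₜ[R] (c ⊗ₜ[R] a) + c ⊗ₜ[R] (a ⊗ₜ[R] b)})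

variable (R M) in
/-- The presented Schur functor. -/
abbrev cpW := (M ⊗[R] (M ⊗[R] M)) ⧸ cpRel R M

/-- The universal element. -/
def cpw (a b c : M) : cpW R M := Submodule.Quotient.mk (a ⊗ₜ[R] (b ⊗ₜ[R] c))

lemma cpw_self (a c : M) : cpw (R := R) a a c = 0 :=
  (Submodule.Quotient.mk_eq_zero _).2 (Submodule.subset_span (Or.inl ⟨a, c, rfl⟩))

lemma cpw_cyc (a b c : M) : cpw (R := R) a b c + cpw b c a + cpw c a b = 0 :=
  (Submodule.Quotient.mk_eq_zero _).2 (Submodule.subset_span (Or.inr ⟨a, b, c, rfl⟩))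

lemma cpw_swap (a b c : M) : cpw (R := R) a b c = - cpw b a c := by
  have h := cpw_self (R := R) (a + b) c
  have e : cpw (R := R) (a + b) (a + b) c = cpw a a c + cpw a b c + (cpw b a c + cpw b b c) := by
    simp only [cpw, TensorProduct.add_tmul, TensorProduct.tmul_add, Submodule.Quotient.mk_add]
    abel
  rw [e, cpw_self, cpw_self, zero_add, add_zero] at h
  exact eq_neg_of_add_eq_zero_left h

variable (R M) in
/-- The map `W → M ⊗ Sym² M`. -/
noncomputable def cpK : cpW R M →ₗ[R] M ⊗[R] SymSq R M :=
  Submodule.liftQ _ (LinearMap.lTensor M (sq2 R M).mkQ ∘ₗ (LinearMap.id - cpS12)) (by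
    rw [cpRel, Submodule.span_le]
    rintro x (⟨a, c, rfl⟩ | ⟨a, b, c, rfl⟩)
    · simp
    · have h1 := cpM2_comm (R := R) b c
      have h2 := cpM2_comm (R := R) a c
      have h3 := cpM2_comm (R := R) a b
      simp only [cpM2] at h1 h2 h3
      simp [h1, h2, h3]
      abel)

lemma cpK_w (a b c : M) : cpK R M (cpw a b c) = a ⊗ₜ[R] cpM2 b c - b ⊗ₜ[R] cpM2 a c := by
  show LinearMap.lTensor M (sq2 R M).mkQ (a ⊗ₜ[R] (b ⊗ₜ[R] c) - b ⊗ₜ[R] (a ⊗ₜ[R] c)) = _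
  rw [map_sub]
  rfl

lemma cpW_ext {f g : cpW R M →ₗ[R] N} (h : ∀ a b c, f (cpw a b c) = g (cpw a b c)) : f = g := by
  ext a b c
  exact h a b c

lemma cpMS_ext {f g : M ⊗[R] SymSq R M →ₗ[R] N}
    (h : ∀ a b c, f (a ⊗ₜ[R] cpM2 b c) = g (a ⊗ₜ[R] cpM2 b c)) : f = g := by
  ext a b c
  exact h a b c

lemma cp_symMul (a b c : M) : symMul R (a ⊗ₜ[R] cpM2 b c) = cpM3 a b c := rfl

lemma cpK_mem (x : cpW R M) : cpK R M x ∈ SchurL31 (R := R) (M := M) := by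
  rw [SchurL31, LinearMap.mem_ker, ← LinearMap.comp_apply]
  suffices h : symMul R ∘ₗ cpK R M = 0 by rw [h]; rfl
  apply cpW_ext
  intro a b c
  rw [LinearMap.comp_apply, cpK_w, map_sub, cp_symMul, cp_symMul, cpM3_swap12 a b c, sub_self]
  rfl

/-- Functoriality of `W`. -/
noncomputable def cpWmap (f : M →ₗ[R] N) : cpW R M →ₗ[R] cpW R N :=
  Submodule.mapQ _ _ (TensorProduct.map f (TensorProduct.map f f)) (by
    rw [cpRel, Submodule.span_le]
    rintro x (⟨a, c, rfl⟩ | ⟨a, b, c, rfl⟩) <;>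
      simp only [SetLike.mem_coe, Submodule.mem_comap, map_add, TensorProduct.map_tmul]
    · exact Submodule.subset_span (Or.inl ⟨f a, f c, rfl⟩)
    · exact Submodule.subset_span (Or.inr ⟨f a, f b, f c, rfl⟩))

lemma cpWmap_w (f : M →ₗ[R] N) (a b c : M) : cpWmap f (cpw a b c) = cpw (f a) (f b) (f c) := rfl

lemma cp_symSqMap (f : M →ₗ[R] N) (a b : M) : symSqMap f (cpM2 a b) = cpM2 (f a) (f b) := rfl

lemma cpK_natural (f : M →ₗ[R] N) (x : cpW R M) :
    TensorProduct.map f (symSqMap f) (cpK R M x) = cpK R N (cpWmap f x) := by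
  suffices h : TensorProduct.map f (symSqMap f) ∘ₗ cpK R M = cpK R N ∘ₗ cpWmap f from
    LinearMap.congr_fun h x
  apply cpW_ext
  intro a b c
  simp only [LinearMap.comp_apply, cpK_w, cpWmap_w, map_sub, TensorProduct.map_tmul, cp_symSqMap]

lemma cp_min3 {ι : Type*} [LinearOrder ι] (i j k : ι) :
    (i ≤ j ∧ i ≤ k) ∨ (j ≤ i ∧ j ≤ k) ∨ (k ≤ i ∧ k ≤ j) := by
  rcases le_total i j with h | h <;> rcases le_total i k with h' | h' <;>
    rcases le_total j k with h'' | h'' <;> grind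

lemma cp_koszul_free {ι : Type*} (b : Module.Basis ι R M) :
    ∃ ρ : M ⊗[R] SymSq R M →ₗ[R] cpW R M, ρ ∘ₗ cpK R M = LinearMap.id ∧
      ∀ x ∈ SchurL31 (R := R) (M := M), cpK R M (ρ x) = x := by
  classical
  let _ : LinearOrder ι := linearOrderOfSTO WellOrderingRel
  let g : ι → ι → ι → cpW R M := fun i j k =>
    if i ≤ j ∧ i ≤ k then 0 else if j ≤ k then cpw (b i) (b j) (b k) else cpw (b i) (b k) (b j)
  have g1 : ∀ i j k, i ≤ j → i ≤ k → g i j k = 0 := fun i j k h h' => if_pos ⟨h, h'⟩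
  have g2 : ∀ i j k, j ≤ i → j ≤ k → g i j k = cpw (b i) (b j) (b k) := by
    intro i j k h h'
    by_cases hi : i ≤ j ∧ i ≤ k
    · obtain rfl := le_antisymm h hi.1
      rw [g1 _ _ _ le_rfl h', cpw_self]
    · simp only [g, if_neg hi, if_pos h']
  have g3 : ∀ i j k, k ≤ i → k ≤ j → g i j k = cpw (b i) (b k) (b j) := by
    intro i j k h h'
    by_cases hi : i ≤ j ∧ i ≤ k
    · obtain rfl := le_antisymm h hi.2
      rw [g1 _ _ _ h' le_rfl, cpw_self]
    · by_cases hj : j ≤ k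
      · obtain rfl := le_antisymm h' hj
        rw [g2 _ _ _ h le_rfl]
      · simp only [g, if_neg hi, if_neg hj]
  have gsymm : ∀ i j k, g i j k = g i k j := by
    intro i j k
    rcases cp_min3 i j k with h | h | h
    · rw [g1 _ _ _ h.1 h.2, g1 _ _ _ h.2 h.1]
    · rw [g2 _ _ _ h.1 h.2, g3 _ _ _ h.1 h.2]
    · rw [g3 _ _ _ h.1 h.2, g2 _ _ _ h.1 h.2]
  let s : ι → ι → ι → M ⊗[R] SymSq R M := fun i j k =>
    if i ≤ j ∧ i ≤ k then b i ⊗ₜ[R] cpM2 (b j) (b k)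
    else if j ≤ k then b j ⊗ₜ[R] cpM2 (b i) (b k) else b k ⊗ₜ[R] cpM2 (b i) (b j)
  have s1 : ∀ i j k, i ≤ j → i ≤ k → s i j k = b i ⊗ₜ[R] cpM2 (b j) (b k) :=
    fun i j k h h' => if_pos ⟨h, h'⟩
  have s2 : ∀ i j k, j ≤ i → j ≤ k → s i j k = b j ⊗ₜ[R] cpM2 (b i) (b k) := by
    intro i j k h h'
    by_cases hi : i ≤ j ∧ i ≤ k
    · obtain rfl := le_antisymm h hi.1
      rw [s1 _ _ _ le_rfl h']
    · simp only [s, if_neg hi, if_pos h']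
  have s3 : ∀ i j k, k ≤ i → k ≤ j → s i j k = b k ⊗ₜ[R] cpM2 (b i) (b j) := by
    intro i j k h h'
    by_cases hi : i ≤ j ∧ i ≤ k
    · obtain rfl := le_antisymm h hi.2
      rw [s1 _ _ _ h' le_rfl, cpM2_comm]
    · by_cases hj : j ≤ k
      · obtain rfl := le_antisymm h' hj
        rw [s2 _ _ _ h le_rfl]
      · simp only [s, if_neg hi, if_neg hj]
  have ssymm12 : ∀ i j k, s i j k = s j i k := by
    intro i j k
    rcases cp_min3 i j k with h | h | h
    · rw [s1 _ _ _ h.1 h.2, s2 _ _ _ h.1 h.2]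
    · rw [s2 _ _ _ h.1 h.2, s1 _ _ _ h.1 h.2]
    · rw [s3 _ _ _ h.1 h.2, s3 _ _ _ h.2 h.1, cpM2_comm]
  have ssymm23 : ∀ i j k, s i j k = s i k j := by
    intro i j k
    rcases cp_min3 i j k with h | h | h
    · rw [s1 _ _ _ h.1 h.2, s1 _ _ _ h.2 h.1, cpM2_comm]
    · rw [s2 _ _ _ h.1 h.2, s3 _ _ _ h.1 h.2]
    · rw [s3 _ _ _ h.1 h.2, s2 _ _ _ h.1 h.2]
  have ext3 : ∀ {A : Type _} [AddCommGroup A] [Module R A] (u v : M ⊗[R] (M ⊗[R] M) →ₗ[R] A),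
      (∀ i j k, u (b i ⊗ₜ[R] (b j ⊗ₜ[R] b k)) = v (b i ⊗ₜ[R] (b j ⊗ₜ[R] b k))) → u = v := by
    intro A _ _ u v h
    refine (b.tensorProduct (b.tensorProduct b)).ext fun t => ?_
    rw [Module.Basis.tensorProduct_apply', Module.Basis.tensorProduct_apply']
    exact h _ _ _
  let σ' : M ⊗[R] (M ⊗[R] M) →ₗ[R] M ⊗[R] SymSq R M :=
    (b.tensorProduct (b.tensorProduct b)).constr R (fun t : ι × ι × ι => s t.1 t.2.1 t.2.2)
  have hσ' : ∀ i j k, σ' (b i ⊗ₜ[R] (b j ⊗ₜ[R] b k)) = s i j k := by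
    intro i j k
    rw [← Module.Basis.tensorProduct_apply, ← Module.Basis.tensorProduct_apply,
      Module.Basis.constr_basis]
  let σ : SymCube R M →ₗ[R] M ⊗[R] SymSq R M := cpSymLift σ'
    (by
      refine ext3 _ _ fun i j k => ?_
      rw [LinearMap.comp_apply, cpS12_tmul, hσ', hσ', ssymm12])
    (by
      refine ext3 _ _ fun i j k => ?_
      rw [LinearMap.comp_apply, cpS23_tmul, hσ', hσ', ssymm23])
  have hσ : ∀ i j k, σ (cpM3 (b i) (b j) (b k)) = s i j k := hσ'
  let ρ0 : ι → M ⊗[R] M →ₗ[R] cpW R M := fun i =>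
    (b.tensorProduct b).constr R (fun t : ι × ι => g i t.1 t.2)
  have hρ0 : ∀ i j k, ρ0 i (b j ⊗ₜ[R] b k) = g i j k := by
    intro i j k
    rw [← Module.Basis.tensorProduct_apply, Module.Basis.constr_basis]
  have hρ0s : ∀ i, ρ0 i ∘ₗ (TensorProduct.comm R M M).toLinearMap = ρ0 i := by
    intro i
    refine (b.tensorProduct b).ext fun t => ?_
    rw [Module.Basis.tensorProduct_apply', LinearMap.comp_apply, LinearEquiv.coe_coe,
      TensorProduct.comm_tmul, hρ0, hρ0, gsymm]
  let ρ1 : ι → SymSq R M →ₗ[R] cpW R M := fun i => Submodule.liftQ _ (ρ0 i) (by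
    rw [sq2, Submodule.span_le]
    rintro x ⟨m, n, rfl⟩
    have := LinearMap.congr_fun (hρ0s i) (m ⊗ₜ[R] n)
    rw [LinearMap.comp_apply, LinearEquiv.coe_coe, TensorProduct.comm_tmul] at this
    rw [SetLike.mem_coe, LinearMap.mem_ker, map_sub, this, sub_self])
  let ρ : M ⊗[R] SymSq R M →ₗ[R] cpW R M := TensorProduct.lift (b.constr R ρ1)
  have hρ : ∀ i j k, ρ (b i ⊗ₜ[R] cpM2 (b j) (b k)) = g i j k := by
    intro i j k
    show (b.constr R ρ1) (b i) _ = _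
    rw [Module.Basis.constr_basis]
    exact hρ0 i j k
  refine ⟨ρ, ?_, ?_⟩
  · apply Submodule.linearMap_qext
    refine ext3 _ _ fun i j k => ?_
    show ρ (cpK R M (cpw (b i) (b j) (b k))) = cpw (b i) (b j) (b k)
    rw [cpK_w, map_sub, hρ, hρ]
    rcases cp_min3 i j k with h | h | h
    · rw [g1 _ _ _ h.1 h.2, g2 _ _ _ h.1 h.2, cpw_swap (b j), zero_sub, neg_neg]
    · rw [g2 _ _ _ h.1 h.2, g1 _ _ _ h.1 h.2, sub_zero]
    · rw [g3 _ _ _ h.1 h.2, g3 _ _ _ h.2 h.1]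
      have h1 := cpw_cyc (R := R) (b i) (b j) (b k)
      rw [cpw_swap (b k) (b i)] at h1
      rw [add_neg_eq_zero] at h1
      rw [← h1, cpw_swap (b j) (b k)]
      rw [cpw_swap (b j) (b k)] at h1
      abel
  · have hom : cpK R M ∘ₗ ρ = LinearMap.id - σ ∘ₗ symMul R := by
      suffices h : (cpK R M ∘ₗ ρ) ∘ₗ LinearMap.lTensor M (sq2 R M).mkQ =
          (LinearMap.id - σ ∘ₗ symMul R) ∘ₗ LinearMap.lTensor M (sq2 R M).mkQ from
        cpMS_ext fun x y z => LinearMap.congr_fun h (x ⊗ₜ[R] (y ⊗ₜ[R] z))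
      refine ext3 _ _ fun i j k => ?_
      show cpK R M (ρ (b i ⊗ₜ[R] cpM2 (b j) (b k))) =
        b i ⊗ₜ[R] cpM2 (b j) (b k) - σ (cpM3 (b i) (b j) (b k))
      rw [hρ, hσ]
      rcases cp_min3 i j k with h | h | h
      · rw [g1 _ _ _ h.1 h.2, s1 _ _ _ h.1 h.2, map_zero, sub_self]
      · rw [g2 _ _ _ h.1 h.2, s2 _ _ _ h.1 h.2, cpK_w]
      · rw [g3 _ _ _ h.1 h.2, s3 _ _ _ h.1 h.2, cpK_w, cpM2_comm (b k)]
    intro x hx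
    have := LinearMap.congr_fun hom x
    rw [SchurL31, LinearMap.mem_ker] at hx
    simpa [hx] using this

lemma cp_koszul [Module.Projective R M] :
    ∃ ρ : M ⊗[R] SymSq R M →ₗ[R] cpW R M, ρ ∘ₗ cpK R M = LinearMap.id ∧
      ∀ x ∈ SchurL31 (R := R) (M := M), cpK R M (ρ x) = x := by
  obtain ⟨s, hs⟩ := Module.Projective.out (R := R) (P := M)
  set π := Finsupp.linearCombination R (id : M → M)
  obtain ⟨r, hr, hr'⟩ := cp_koszul_free (R := R) (M := M →₀ R) Finsupp.basisSingleOne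
  refine ⟨cpWmap π ∘ₗ r ∘ₗ TensorProduct.map s (symSqMap s), ?_, ?_⟩
  · refine cpW_ext fun a b c => ?_
    have h1 := LinearMap.congr_fun hr (cpWmap s (cpw a b c))
    simp only [LinearMap.comp_apply, LinearMap.id_apply] at h1 ⊢
    rw [cpK_natural, h1, cpWmap_w, cpWmap_w, hs, hs, hs]
  · intro x hx
    have hmem := (schurL31Map s ⟨x, hx⟩).2
    have h1 := hr' _ hmem
    change cpK R _ (r (TensorProduct.map s (symSqMap s) x)) =
      TensorProduct.map s (symSqMap s) x at h1
    simp only [LinearMap.comp_apply]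
    rw [← cpK_natural, h1, ← LinearMap.comp_apply]
    suffices h : TensorProduct.map π (symSqMap π) ∘ₗ TensorProduct.map s (symSqMap s) =
      LinearMap.id by rw [h]; rfl
    refine cpMS_ext fun a b c => ?_
    simp only [LinearMap.comp_apply, TensorProduct.map_tmul, cp_symSqMap, hs _, LinearMap.id_apply]

lemma cpWEquiv [Module.Projective R M] :
    Nonempty (cpW R M ≃ₗ[R] SchurL31 (R := R) (M := M)) := by
  obtain ⟨ρ, h1, h2⟩ := cp_koszul (R := R) (M := M)
  refine ⟨(LinearEquiv.ofInjective (cpK R M)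
    (Function.LeftInverse.injective (g := ρ) (LinearMap.congr_fun h1))).trans
    (LinearEquiv.ofEq _ _ (le_antisymm ?_ ?_))⟩
  · rintro _ ⟨x, rfl⟩
    exact cpK_mem x
  · intro x hx
    exact ⟨ρ x, h2 x hx⟩

end Part2

section Part2b
variable (R P Q : Type u) [CommRing R] [AddCommGroup P] [Module R P] [AddCommGroup Q] [Module R Q]

/-- The polarization `Sym³(P ⊗ Q) → (P ⊗ Sym² P) ⊗ (Q ⊗ Sym² Q)`. -/
noncomputable def cpPhi : SymCube R (P ⊗[R] Q) →ₗ[R]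
    (P ⊗[R] SymSq R P) ⊗[R] (Q ⊗[R] SymSq R Q) :=
  cpSymLift (TensorProduct.map (LinearMap.lTensor P (sq2 R P).mkQ)
      (LinearMap.lTensor Q (sq2 R Q).mkQ) ∘ₗ cpRe.toLinearMap ∘ₗ
        (LinearMap.id + cpS12 + cpS12 ∘ₗ cpS23))
    (by
      ext a x b y c z
      have e : ∀ (a b c : P) (x y z : Q), TensorProduct.map (LinearMap.lTensor P (sq2 R P).mkQ)
        (LinearMap.lTensor Q (sq2 R Q).mkQ)
          ((a ⊗ₜ[R] (b ⊗ₜ[R] c)) ⊗ₜ[R] (x ⊗ₜ[R] (y ⊗ₜ[R] z))) =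
          (a ⊗ₜ[R] cpM2 b c) ⊗ₜ[R] (x ⊗ₜ[R] cpM2 y z) := fun _ _ _ _ _ _ => rfl
      simp only [TensorProduct.AlgebraTensorModule.curry_apply, LinearEquiv.coe_coe, cpRe_tmul,
          LinearMap.restrictScalars_self, TensorProduct.curry_apply, LinearMap.comp_apply,
          LinearMap.add_apply, cpS12_tmul, cpS23_tmul, LinearMap.id_apply, map_add, e]
      rw [cpM2_comm b a, cpM2_comm y x]
      abel)
    (by
      ext a x b y c z
      have e : ∀ (a b c : P) (x y z : Q), TensorProduct.map (LinearMap.lTensor P (sq2 R P).mkQ)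
        (LinearMap.lTensor Q (sq2 R Q).mkQ)
          ((a ⊗ₜ[R] (b ⊗ₜ[R] c)) ⊗ₜ[R] (x ⊗ₜ[R] (y ⊗ₜ[R] z))) =
          (a ⊗ₜ[R] cpM2 b c) ⊗ₜ[R] (x ⊗ₜ[R] cpM2 y z) := fun _ _ _ _ _ _ => rfl
      simp only [TensorProduct.AlgebraTensorModule.curry_apply, LinearEquiv.coe_coe, cpRe_tmul,
          LinearMap.restrictScalars_self, TensorProduct.curry_apply, LinearMap.comp_apply,
          LinearMap.add_apply, cpS12_tmul, cpS23_tmul, LinearMap.id_apply, map_add, e]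
      rw [cpM2_comm c b, cpM2_comm z y]
      abel)

lemma cpPhi_m3 (a b c : P) (x y z : Q) :
    cpPhi R P Q (cpM3 (a ⊗ₜ[R] x) (b ⊗ₜ[R] y) (c ⊗ₜ[R] z)) =
      (a ⊗ₜ[R] cpM2 b c) ⊗ₜ[R] (x ⊗ₜ[R] cpM2 y z)
      + (b ⊗ₜ[R] cpM2 a c) ⊗ₜ[R] (y ⊗ₜ[R] cpM2 x z)
      + (c ⊗ₜ[R] cpM2 a b) ⊗ₜ[R] (z ⊗ₜ[R] cpM2 x y) := by
  rw [cpPhi, cpSymLift_m3]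
  simp only [LinearMap.comp_apply, LinearMap.add_apply, cpS12_tmul, cpS23_tmul, LinearMap.id_apply,
    map_add, LinearEquiv.coe_coe, cpRe_tmul]
  rfl

lemma cpPhi_det2 (a b c : P) (x y z : Q) :
    cpPhi R P Q (det2Elem R P Q a b c x y z) =
      cpK R P (cpw a b c) ⊗ₜ[R] cpK R Q (cpw x y z) := by
  rw [cp_det2, map_sub, cpPhi_m3, cpPhi_m3, cpK_w, cpK_w, cpM2_comm y x]
  simp only [TensorProduct.tmul_sub, TensorProduct.sub_tmul]
  abel

lemma cpPhi_M3 : M3 R P Q ≤ LinearMap.ker (cpPhi R P Q) := by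
  rw [M3, Submodule.span_le]
  rintro _ ⟨p, q, rfl⟩
  rw [SetLike.mem_coe, LinearMap.mem_ker, cp_det3_eq_q]
  simp only [map_add, cpPhi_det2]
  rw [← TensorProduct.tmul_add, ← TensorProduct.tmul_add, ← map_add, ← map_add, cpw_cyc, map_zero,
    TensorProduct.tmul_zero]

/-- The map giving `2 × 2` minors times an element. -/
noncomputable def cpPsi0 : (P ⊗[R] (P ⊗[R] P)) ⊗[R] (Q ⊗[R] (Q ⊗[R] Q)) →ₗ[R]
    SymCube R (P ⊗[R] Q) := cpMu ∘ₗ LinearMap.lTensor _ (LinearMap.id - cpS12)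

lemma cpPsi0_tmul (a b c : P) (x y z : Q) :
    cpPsi0 R P Q ((a ⊗ₜ[R] (b ⊗ₜ[R] c)) ⊗ₜ[R] (x ⊗ₜ[R] (y ⊗ₜ[R] z))) =
      det2Elem R P Q a b c x y z := by
  simp only [cpPsi0, LinearMap.comp_apply, LinearMap.lTensor_tmul, LinearMap.sub_apply,
    LinearMap.id_apply, cpS12_tmul, TensorProduct.tmul_sub, map_sub, cpMu_tmul, cp_det2]

/-- The map `W P ⊗ W Q → Sym³(P ⊗ Q) / M₍₃₎`. -/
noncomputable def cpPsi : cpW R P ⊗[R] cpW R Q →ₗ[R] SymCube R (P ⊗[R] Q) ⧸ M3 R P Q :=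
  cpDescend (cpRel R P) (cpRel R Q) ((M3 R P Q).mkQ ∘ₗ cpPsi0 R P Q)
    (cp_vanish_left _ (by
      rintro _ (⟨a, c, rfl⟩ | ⟨a, b, c, rfl⟩) x y z
      · rw [LinearMap.comp_apply, cpPsi0_tmul, cp_det2_self, map_zero]
      · rw [LinearMap.comp_apply, TensorProduct.add_tmul, TensorProduct.add_tmul,
          map_add (cpPsi0 R P Q), map_add (cpPsi0 R P Q),
          cpPsi0_tmul, cpPsi0_tmul, cpPsi0_tmul]
        have h := cp_det3_mem (R := R) ![a, b, c] ![x, y, z]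
        rw [cp_det3_eq_p] at h
        exact (Submodule.Quotient.mk_eq_zero _).2 h))
    (cp_vanish_right _ (by
      rintro _ (⟨x, z, rfl⟩ | ⟨x, y, z, rfl⟩) a b c
      · rw [LinearMap.comp_apply, cpPsi0_tmul, cp_det2_self_q, map_zero]
      · rw [LinearMap.comp_apply, TensorProduct.tmul_add, TensorProduct.tmul_add,
          map_add (cpPsi0 R P Q), map_add (cpPsi0 R P Q),
          cpPsi0_tmul, cpPsi0_tmul, cpPsi0_tmul]
        have h := cp_det3_mem (R := R) ![a, b, c] ![x, y, z]
        rw [cp_det3_eq_q] at h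
        exact (Submodule.Quotient.mk_eq_zero _).2 h))

lemma cpPsi_w (a b c : P) (x y z : Q) : cpPsi R P Q (cpw a b c ⊗ₜ[R] cpw x y z) =
    (M3 R P Q).mkQ (det2Elem R P Q a b c x y z) := by
  rw [← cpPsi0_tmul]
  rfl

lemma cpPsi_range : LinearMap.range (cpPsi R P Q) = (M21 R P Q).map (M3 R P Q).mkQ := by
  have hsurj : Function.Surjective (TensorProduct.map (cpRel R P).mkQ (cpRel R Q).mkQ) :=
    TensorProduct.map_surjective (Submodule.mkQ_surjective _) (Submodule.mkQ_surjective _)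
  have hcomp : cpPsi R P Q ∘ₗ TensorProduct.map (cpRel R P).mkQ (cpRel R Q).mkQ =
      (M3 R P Q).mkQ ∘ₗ cpPsi0 R P Q := by
    ext a b c x y z
    rfl
  rw [← LinearMap.range_comp_of_range_eq_top _ (LinearMap.range_eq_top.2 hsurj), hcomp,
    LinearMap.range_comp]
  congr 1
  apply le_antisymm
  · suffices h : (M21 R P Q).mkQ ∘ₗ cpPsi0 R P Q = 0 by
      rintro _ ⟨t, rfl⟩
      exact (Submodule.Quotient.mk_eq_zero _).1 (LinearMap.congr_fun h t)
    ext a b c x y z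
    refine (Submodule.Quotient.mk_eq_zero _).2 ?_
    show cpPsi0 R P Q ((a ⊗ₜ[R] (b ⊗ₜ[R] c)) ⊗ₜ[R] (x ⊗ₜ[R] (y ⊗ₜ[R] z))) ∈ M21 R P Q
    rw [cpPsi0_tmul]
    exact cp_det2_mem a b c x y z
  · rw [cp_M21_eq, Submodule.span_le]
    rintro _ ⟨a, b, c, x, y, z, rfl⟩
    exact ⟨_, cpPsi0_tmul R P Q a b c x y z⟩

lemma cpEquiv2 [Module.Projective R P] [Module.Projective R Q] :
    Nonempty ((M21 R P Q ⧸ Submodule.comap (M21 R P Q).subtype (M3 R P Q)) ≃ₗ[R]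
      ((SchurL31 (R := R) (M := P)) ⊗[R] (SchurL31 (R := R) (M := Q)))) := by
  obtain ⟨r, hr, -⟩ := cp_koszul (R := R) (M := P)
  obtain ⟨s, hs, -⟩ := cp_koszul (R := R) (M := Q)
  obtain ⟨eP⟩ := cpWEquiv (R := R) (M := P)
  obtain ⟨eQ⟩ := cpWEquiv (R := R) (M := Q)
  have hinj : Function.Injective (cpPsi R P Q) := by
    let φ := Submodule.liftQ _ (cpPhi R P Q) (cpPhi_M3 R P Q)
    have h0 : φ ∘ₗ cpPsi R P Q = TensorProduct.map (cpK R P) (cpK R Q) :=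
      cp_ext_quot fun a b c x y z => by
        refine (congrArg φ (cpPsi_w R P Q a b c x y z)).trans ?_
        exact cpPhi_det2 R P Q a b c x y z
    have h : (TensorProduct.map r s ∘ₗ φ) ∘ₗ cpPsi R P Q = LinearMap.id := by
      rw [LinearMap.comp_assoc, h0, ← TensorProduct.map_comp, hr, hs, TensorProduct.map_id]
    exact Function.LeftInverse.injective (g := TensorProduct.map r s ∘ₗ φ)
      (LinearMap.congr_fun h)
  let g : M21 R P Q →ₗ[R] SymCube R (P ⊗[R] Q) ⧸ M3 R P Q :=
    (M3 R P Q).mkQ ∘ₗ (M21 R P Q).subtype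
  have hker : Submodule.comap (M21 R P Q).subtype (M3 R P Q) = LinearMap.ker g := by
    rw [LinearMap.ker_comp, Submodule.ker_mkQ]
  have hrange : LinearMap.range g = LinearMap.range (cpPsi R P Q) := by
    rw [cpPsi_range, LinearMap.range_comp, Submodule.range_subtype]
  exact ⟨(Submodule.quotEquivOfEq _ _ hker).trans <| g.quotKerEquivRange.trans <|
    (LinearEquiv.ofEq _ _ hrange).trans <| (LinearEquiv.ofInjective _ hinj).symm.trans <|
    TensorProduct.congr eP eQ⟩

end Part2b

end CauchyProof

/-- for finitely generated projective modules `P`, `Q` over a commutative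
ring `R`, the Cauchy filtration `0 ⊆ M₍₃₎ ⊆ M₍₂,₁₎ ⊆ Sym³(P ⊗ Q)` (where `M₍₃₎` is the
image of the determinant map `Λ³P ⊗ Λ³Q → Sym³(P ⊗ Q)`) has graded pieces given by the
short exact sequences `0 → Λ³P ⊗ Λ³Q → M₍₂,₁₎ → L³₁P ⊗ L³₁Q → 0` and
`0 → M₍₂,₁₎ → Sym³(P ⊗ Q) → Sym³P ⊗ Sym³Q → 0`; equivalently `M₍₃₎ ≅ Λ³P ⊗ Λ³Q`,
`M₍₂,₁₎/M₍₃₎ ≅ L³₁P ⊗ L³₁Q` and `Sym³(P ⊗ Q)/M₍₂,₁₎ ≅ Sym³P ⊗ Sym³Q`. -/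
theorem cauchy_filtration_sym3 (R P Q : Type u) [CommRing R]
    [AddCommGroup P] [Module R P] [Module.Finite R P] [Module.Projective R P]
    [AddCommGroup Q] [Module R Q] [Module.Finite R Q] [Module.Projective R Q] :
    M3 R P Q ≤ M21 R P Q ∧
    Nonempty ((M3 R P Q) ≃ₗ[R] ((⋀[R]^3 P) ⊗[R] (⋀[R]^3 Q))) ∧
    Nonempty ((M21 R P Q ⧸ Submodule.comap (M21 R P Q).subtype (M3 R P Q)) ≃ₗ[R]
      ((SchurL31 (R := R) (M := P)) ⊗[R] (SchurL31 (R := R) (M := Q)))) ∧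
    Nonempty ((SymCube R (P ⊗[R] Q) ⧸ M21 R P Q) ≃ₗ[R]
      (SymCube R P ⊗[R] SymCube R Q)) := by
  exact ⟨le_sup_left, cpEquiv1 R P Q, cpEquiv2 R P Q, ⟨cpEquiv3 R P Q⟩⟩
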